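/- Let u be a positive divisor of q−1, suppose n' ≥ 4, and let w ∈ {1, ..., n'−3} and y ∈ {1, ..., m}. Then the repair bandwidth b = Σ_{(w',z) ∈ ({0,...,n'−1}×{1,...,m}) \ {(w,y)}} rank_B({ζ^{u(t + s·d_{w',z})} : t ∈ T_{w,y}, s ∈ {0, ..., r̄−1}}) of the linear repair scheme of Construction 2 for a node of rack (w,y) satisfies b < ((n̄−1) + 3r̄ + 3m + 1)·l/r̄. -/

import Mathlib

/-- `∏_{j=1}^{y-1} p_j` (the empty product is `1`). -/
def bigP (p : ℕ → ℕ) (y : ℕ) : ℕ := ∏ j ∈ Finset.Icc 1 (y - 1), p j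

/-- `d_{w,y} = r^w · ∏_{j=1}^{y-1} p_j`. -/
def dwy (p : ℕ → ℕ) (r w y : ℕ) : ℕ := r ^ w * bigP p y

/-- The digit of `t` at position `pos = w·m + y` (`1 ≤ y ≤ m`) in the multi-base
expansion `t = Σ_{w,y} t_{wm+y} · d_{w,y}`, namely `(t / d_{w,y}) % p_y`. -/
def digit (p : ℕ → ℕ) (m r t pos : ℕ) : ℕ :=
  t / dwy p r ((pos - 1) / m) ((pos - 1) % m + 1) % p ((pos - 1) % m + 1)

/-- The weight `d_{i / m, i % m + 1}` of the digit with zero-based position `i`. -/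
def digitWeight (p : ℕ → ℕ) (m r i : ℕ) : ℕ := dwy p r (i / m) (i % m + 1)

lemma bigP_succ (p : ℕ → ℕ) (j : ℕ) : bigP p (j + 2) = bigP p (j + 1) * p (j + 1) := by
  simp only [bigP, Nat.add_sub_cancel, show j + 2 - 1 = j + 1 by omega]
  exact Finset.prod_Icc_succ_top (by omega) _

lemma bigP_one (p : ℕ → ℕ) : bigP p 1 = 1 := by simp [bigP]

lemma digitWeight_mul_add (p : ℕ → ℕ) {m : ℕ} (r k : ℕ) {j : ℕ} (hj : j < m) :
    digitWeight p m r (k * m + j) = dwy p r k (j + 1) := by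
  have hm : 0 < m := by omega
  rw [digitWeight, Nat.mul_comm k m, Nat.mul_add_div hm, Nat.mul_add_mod, Nat.div_eq_of_lt hj,
    Nat.mod_eq_of_lt hj, Nat.add_zero]

lemma digitWeight_succ {p : ℕ → ℕ} {m r : ℕ} (hm : 0 < m)
    (hr : r = ∏ i ∈ Finset.Icc 1 m, p i) (i : ℕ) :
    digitWeight p m r (i + 1) = digitWeight p m r i * p (i % m + 1) := by
  obtain ⟨k, j, hj, rfl⟩ : ∃ k j, j < m ∧ i = k * m + j :=
    ⟨i / m, i % m, Nat.mod_lt _ hm, (Nat.div_add_mod' i m).symm⟩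
  have hmod : (k * m + j) % m = j := by
    rw [Nat.mul_comm, Nat.mul_add_mod, Nat.mod_eq_of_lt hj]
  rw [hmod, digitWeight_mul_add p r k hj]
  rcases Nat.lt_or_ge (j + 1) m with h | h
  · rw [add_assoc, digitWeight_mul_add p r k h, dwy, dwy, bigP_succ, mul_assoc]
  · obtain rfl : m = j + 1 := by omega
    have hlast : bigP p (j + 2) = r := by rw [hr, bigP]; rfl
    rw [show k * (j + 1) + j + 1 = (k + 1) * (j + 1) + 0 by ring,
      digitWeight_mul_add p r _ hm, dwy, dwy, mul_assoc, ← bigP_succ, hlast, bigP_one,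
      pow_succ, mul_one]

lemma digitWeight_add_period (p : ℕ → ℕ) {m : ℕ} (r : ℕ) (hm : 0 < m) (i : ℕ) :
    digitWeight p m r (i + m) = r * digitWeight p m r i := by
  simp only [digitWeight, dwy, Nat.add_div_right _ hm, Nat.add_mod_right, pow_succ]
  ring

/-- If consecutive digits of `t` vanish, the corresponding remainders of `t` agree. -/
lemma mod_weight_eq_of_digits_eq_zero {D P : ℕ → ℕ} (hD : ∀ i, D (i + 1) = D i * P i)
    {t A : ℕ} : ∀ n, (∀ k < n, t / D (A + k) % P (A + k) = 0) → t % D (A + n) = t % D A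
  | 0, _ => rfl
  | n + 1, h => by
    rw [← add_assoc, hD, Nat.mod_mul, h n (by omega), mul_zero, add_zero]
    exact mod_weight_eq_of_digits_eq_zero hD n fun k hk => h k (by omega)

lemma dvd_add_of_forall_dvd_succ {D : ℕ → ℕ} (h : ∀ i, D i ∣ D (i + 1)) (a n : ℕ) :
    D a ∣ D (a + n) := by
  induction n with
  | zero => rfl
  | succ n ih => exact ih.trans (h _)

lemma sum_range_le_of_two_mul_le {D : ℕ → ℕ} (h2 : ∀ i, 2 * D i ≤ D (i + 1)) (a n : ℕ) :
    ∑ k ∈ Finset.range n, D (a + k) ≤ D (a + n) := by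
  induction n with
  | zero => simp
  | succ n ih =>
    rw [Finset.sum_range_succ]
    have := h2 (a + n)
    rw [← add_assoc]
    omega

lemma sum_range_div_le_of_two_mul_le {D : ℕ → ℕ} (hpos : ∀ i, 0 < D i)
    (h2 : ∀ i, 2 * D i ≤ D (i + 1)) (l a n : ℕ) :
    ∑ k ∈ Finset.range n, l / D (a + 1 + k) ≤ l / D a := by
  have key : ∑ k ∈ Finset.range n, l / D (a + 1 + k) + l / D (a + n) ≤ l / D a := by
    induction n with
    | zero => simp
    | succ n ih =>
      have hstep : 2 * (l / D (a + n + 1)) ≤ l / D (a + n) := by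
        rw [Nat.le_div_iff_mul_le (hpos _)]
        calc 2 * (l / D (a + n + 1)) * D (a + n)
            = l / D (a + n + 1) * (2 * D (a + n)) := by ring
          _ ≤ l / D (a + n + 1) * D (a + n + 1) := Nat.mul_le_mul_left _ (h2 _)
          _ ≤ l := Nat.div_mul_le_self _ _
      rw [Finset.sum_range_succ, show a + 1 + n = a + n + 1 by ring,
        show a + (n + 1) = a + n + 1 by ring]
      omega
  exact (Nat.le_add_right _ _).trans key

lemma finrank_span_le_of_forall_exists {B F : Type*} [Field B] [AddCommGroup F] [Module B F]
    [Module.Finite B F] (S : Set F) (g : ℕ → ℕ → F) (X Y : ℕ)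
    (h : ∀ x ∈ S, ∃ a < X, ∃ b < Y, x = g a b) :
    Module.finrank B (Submodule.span B S) ≤ X * Y := by
  classical
  let I : Finset F := (Finset.range X ×ˢ Finset.range Y).image fun ab => g ab.1 ab.2
  have hS : S ⊆ (I : Set F) := by
    intro x hx
    obtain ⟨a, ha, b, hb, rfl⟩ := h x hx
    simp only [I, Finset.coe_image, Set.mem_image, Finset.mem_coe, Finset.mem_product,
      Finset.mem_range]
    exact ⟨(a, b), ⟨ha, hb⟩, rfl⟩
  calc Module.finrank B (Submodule.span B S)
      ≤ Module.finrank B (Submodule.span B (I : Set F)) :=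
        Submodule.finrank_mono (Submodule.span_mono hS)
    _ ≤ I.card := finrank_span_finset_le_card I
    _ ≤ X * Y := Finset.card_image_le.trans (by simp)

section RankBounds

variable {B F : Type*} [Field B] [Field F] [Algebra B F] [Module.Finite B F]

/-- The powers `ζ ^ (u * (t + s * E))` with `s < r` and `t < r * D * K` having remainder
less than `D` modulo `r * D`. -/
def downloadSet (ζ : F) (u r D K E : ℕ) : Set F :=
  {x | ∃ a < D, ∃ b < K, ∃ s < r, x = ζ ^ (u * (a + r * D * b + s * E))}

lemma finrank_span_downloadSet_le_low (ζ : F) (u r D K E : ℕ) :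
    Module.finrank B (Submodule.span B (downloadSet ζ u r D K E)) ≤ (D + r * E) * K := by
  refine finrank_span_le_of_forall_exists _ (fun a b => ζ ^ (u * (a + r * D * b))) _ _ ?_
  rintro x ⟨a, ha, b, hb, s, hs, rfl⟩
  have := Nat.mul_le_mul_right E hs.le
  exact ⟨a + s * E, by omega, b, hb, by ring⟩

lemma finrank_span_downloadSet_le_mid (ζ : F) (u r D K E : ℕ) (hE : 0 < E) (hdvd : E ∣ r * D) :
    Module.finrank B (Submodule.span B (downloadSet ζ u r D K E)) ≤
      D * (r * D * K / E + r) := by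
  obtain ⟨e, he⟩ := hdvd
  refine finrank_span_le_of_forall_exists _ (fun a b => ζ ^ (u * (a + E * b))) _ _ ?_
  rintro x ⟨a, ha, b, hb, s, hs, rfl⟩
  have hdiv : r * D * K / E = e * K := by rw [he, mul_assoc, Nat.mul_div_cancel_left _ hE]
  have := Nat.mul_le_mul_left e hb.le
  exact ⟨a, ha, e * b + s, by omega, by rw [he]; ring⟩

lemma finrank_span_downloadSet_le_high (ζ : F) (u r D K E : ℕ) (hdvd : r * D ∣ E) :
    Module.finrank B (Submodule.span B (downloadSet ζ u r D K E)) ≤ D * K + E := by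
  obtain ⟨f, rfl⟩ := hdvd
  have h := finrank_span_le_of_forall_exists (B := B) (downloadSet ζ u r D K (r * D * f))
    (fun a b => ζ ^ (u * (a + r * D * b))) D (K + r * f) ?_
  · exact h.trans_eq (by ring)
  rintro x ⟨a, ha, b, hb, s, hs, rfl⟩
  have := Nat.mul_le_mul_right f hs.le
  exact ⟨a, ha, b + s * f, by omega, by ring⟩

/-- Total rank bound for a sequence of weights `D` that at least doubles at each step,
each weight dividing the next. -/
lemma sum_finrank_span_downloadSet_le (ζ : F) (u r m A c K : ℕ) {D : ℕ → ℕ} (hm : 0 < m)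
    (hpos : ∀ i, 0 < D i) (h2 : ∀ i, 2 * D i ≤ D (i + 1)) (hdvd : ∀ i, D i ∣ D (i + 1))
    (hperiod : D (A + m) = r * D A) (htop : D (A + m + c) = r * D A * K) (hK : r ≤ K) :
    ∑ i ∈ (Finset.range (A + m + c)).erase A,
      Module.finrank B (Submodule.span B (downloadSet ζ u r (D A) K (D i))) ≤
      (A + m + c - 1 + 3 * r) * (D A * K) := by
  set f : ℕ → ℕ := fun i =>
    Module.finrank B (Submodule.span B (downloadSet ζ u r (D A) K (D i)))
  have hmono := dvd_add_of_forall_dvd_succ hdvd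
  have hsplit : ∑ i ∈ (Finset.range (A + m + c)).erase A, f i =
      ∑ i ∈ Finset.range A, f i + ∑ k ∈ Finset.range (m - 1), f (A + 1 + k) +
        ∑ k ∈ Finset.range c, f (A + m + k) := by
    have h := Finset.add_sum_erase (Finset.range (A + m + c)) f (a := A)
      (by rw [Finset.mem_range]; omega)
    rw [Finset.sum_range_add, show A + m = A + 1 + (m - 1) by omega, Finset.sum_range_add,
      Finset.sum_range_succ, show A + 1 + (m - 1) = A + m by omega] at h
    omega
  have hlow : ∑ i ∈ Finset.range A, f i ≤ A * (D A * K) + r * (D A * K) := by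
    have hsum := sum_range_le_of_two_mul_le h2 0 A
    simp only [zero_add] at hsum
    calc ∑ i ∈ Finset.range A, f i
        ≤ ∑ i ∈ Finset.range A, (D A * K + r * K * D i) :=
          Finset.sum_le_sum fun i _ =>
            (finrank_span_downloadSet_le_low ζ u r (D A) K (D i)).trans_eq (by ring)
      _ = A * (D A * K) + r * K * ∑ i ∈ Finset.range A, D i := by
          simp [Finset.sum_add_distrib, Finset.mul_sum]
      _ ≤ A * (D A * K) + r * K * D A := by gcongr
      _ = _ := by ring
  have hmid : ∑ k ∈ Finset.range (m - 1), f (A + 1 + k) ≤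
      r * (D A * K) + (m - 1) * (D A * K) := by
    calc ∑ k ∈ Finset.range (m - 1), f (A + 1 + k)
        ≤ ∑ k ∈ Finset.range (m - 1), (D A * (r * D A * K / D (A + 1 + k)) + D A * r) := by
          refine Finset.sum_le_sum fun k hk => ?_
          rw [Finset.mem_range] at hk
          have hd := hmono (A + 1 + k) (m - 1 - k)
          rw [show A + 1 + k + (m - 1 - k) = A + m by omega, hperiod] at hd
          exact (finrank_span_downloadSet_le_mid ζ u r (D A) K _ (hpos _) hd).trans_eq
            (mul_add _ _ _)
      _ = D A * ∑ k ∈ Finset.range (m - 1), r * D A * K / D (A + 1 + k) +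
            (m - 1) * (D A * r) := by
          rw [Finset.sum_add_distrib, ← Finset.mul_sum]; simp
      _ ≤ D A * (r * D A * K / D A) + (m - 1) * (D A * K) := by
          gcongr
          exact sum_range_div_le_of_two_mul_le hpos h2 _ _ _
      _ = _ := by
          rw [show r * D A * K = D A * (r * K) by ring, Nat.mul_div_cancel_left _ (hpos A)]
          ring
  have hhigh : ∑ k ∈ Finset.range c, f (A + m + k) ≤ c * (D A * K) + r * (D A * K) := by
    calc ∑ k ∈ Finset.range c, f (A + m + k)
        ≤ ∑ k ∈ Finset.range c, (D A * K + D (A + m + k)) :=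
          Finset.sum_le_sum fun k _ =>
            finrank_span_downloadSet_le_high ζ u r (D A) K _ (hperiod ▸ hmono (A + m) k)
      _ = c * (D A * K) + ∑ k ∈ Finset.range c, D (A + m + k) := by
          rw [Finset.sum_add_distrib]; simp
      _ ≤ c * (D A * K) + D (A + m + c) := by
          gcongr
          exact sum_range_le_of_two_mul_le h2 _ _
      _ = _ := by rw [htop]; ring
  rw [hsplit]
  calc _ ≤ A * (D A * K) + r * (D A * K) + (r * (D A * K) + (m - 1) * (D A * K)) +
        (c * (D A * K) + r * (D A * K)) := by gcongr
    _ = (A + (m - 1) + c + 3 * r) * (D A * K) := by ring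
    _ = _ := by rw [show A + (m - 1) + c = A + m + c - 1 by omega]

end RankBounds

/-- Rack pairs other than `(w, y)` correspond to zero-based digit positions. -/
lemma sum_rack_erase_eq_sum_position_erase {M : Type*} [AddCommMonoid M] (p : ℕ → ℕ)
    {m r n w y : ℕ} (hy : y ∈ Finset.Icc 1 m) (f : ℕ → M) :
    ∑ wz ∈ (Finset.range n ×ˢ Finset.Icc 1 m).erase (w, y), f (dwy p r wz.1 wz.2) =
      ∑ i ∈ (Finset.range (n * m)).erase (w * m + (y - 1)), f (digitWeight p m r i) := by
  rw [Finset.mem_Icc] at hy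
  have hm : 0 < m := by omega
  symm
  refine Finset.sum_bij' (fun i _ => (i / m, i % m + 1)) (fun wz _ => wz.1 * m + (wz.2 - 1))
    ?_ ?_ ?_ ?_ ?_
  · intro i hi
    simp only [Finset.mem_erase, Finset.mem_range, Finset.mem_product, Finset.mem_Icc, ne_eq,
      Prod.mk.injEq] at hi ⊢
    have h1 := Nat.mod_lt i hm
    refine ⟨?_, Nat.div_lt_of_lt_mul (by rw [Nat.mul_comm]; exact hi.2), by omega, by omega⟩
    rintro ⟨rfl, rfl⟩
    exact hi.1 (by rw [Nat.add_sub_cancel, Nat.div_add_mod'])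
  · rintro ⟨a, b⟩ h
    simp only [Finset.mem_erase, Finset.mem_range, Finset.mem_product, Finset.mem_Icc, ne_eq,
      Prod.mk.injEq] at h ⊢
    refine ⟨?_, ?_⟩
    · intro heq
      have hdiv := congrArg (· / m) heq
      have hmod := congrArg (· % m) heq
      simp only [Nat.mul_comm _ m, Nat.mul_add_div hm, Nat.mul_add_mod,
        Nat.div_eq_of_lt (show b - 1 < m by omega), Nat.div_eq_of_lt (show y - 1 < m by omega),
        Nat.mod_eq_of_lt (show b - 1 < m by omega),
        Nat.mod_eq_of_lt (show y - 1 < m by omega)] at hdiv hmod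
      exact h.1 ⟨by omega, by omega⟩
    · have := Nat.mul_le_mul_right m (show a + 1 ≤ n from h.2.1)
      rw [Nat.add_mul] at this
      omega
  · intro i _
    simp only [Nat.add_sub_cancel, Nat.div_add_mod']
  · rintro ⟨a, b⟩ h
    simp only [Finset.mem_erase, Finset.mem_range, Finset.mem_product, Finset.mem_Icc, ne_eq,
      Prod.mk.injEq] at h ⊢
    have hb : b - 1 < m := by omega
    rw [Nat.mul_comm a m, Nat.mul_add_div hm, Nat.mul_add_mod, Nat.div_eq_of_lt hb,
      Nat.mod_eq_of_lt hb]
    exact ⟨by omega, by omega⟩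
  · intro i _
    rfl

/-- **Theorem 6(i).** Construction-2 setting: `B = GF(q)`,
primes `p 1, …, p m` (`m ≥ 2`), `r = p 1 ⋯ p m`, `n' ≥ 4`, `n̄ = n'm`,
`l = r^{n'}`, `F = GF(q^l)`, `ζ` primitive in `F`, `u > 0` a divisor of `q-1`.
For a host rack `(w, y)` with `w ∈ {1, …, n'-3}`, `y ∈ {1, …, m}`, and
`T_{w,y} = {t < l : digits of t at positions wm+y, …, wm+y+m-1 are 0}`, the
repair bandwidth
`b = Σ_{(w',z) ≠ (w,y)} rank_B({ζ^{u(t+s·d_{w',z})} : t ∈ T_{w,y}, s < r})`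
satisfies `b < ((n̄-1) + 3r + 3m + 1)·l/r`. -/
theorem stmt_13 (q m : ℕ) (hm : 2 ≤ m) (p : ℕ → ℕ)
    (hp : ∀ i ∈ Finset.Icc 1 m, (p i).Prime)
    (r : ℕ) (hr : r = ∏ i ∈ Finset.Icc 1 m, p i)
    (n' : ℕ) (hn' : 4 ≤ n') (l : ℕ) (hl : l = r ^ n')
    (B F : Type*) [Field B] [Field F] [Fintype B] [Fintype F] [Algebra B F]
    (hq : Fintype.card B = q) (hrk : Module.finrank B F = l)
    (ζ : F) (hζ : orderOf ζ = q ^ l - 1)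
    (u : ℕ) (hu : 0 < u) (hdvd : u ∣ q - 1)
    (w y : ℕ) (hw : w ∈ Finset.Icc 1 (n' - 3)) (hy : y ∈ Finset.Icc 1 m) :
    ((∑ wz ∈ (Finset.range n' ×ˢ Finset.Icc 1 m).erase (w, y),
        Module.finrank B ↥(Submodule.span B
          {x : F | ∃ t, (t < l ∧ ∀ k < m, digit p m r t (w * m + y + k) = 0) ∧
            ∃ s < r, x = ζ ^ (u * (t + s * dwy p r wz.1 wz.2))}) : ℕ) : ℝ)
      < (((n' * m : ℕ) : ℝ) - 1 + 3 * r + 3 * m + 1) * l / r := by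
  have hm0 : 0 < m := by omega
  set D := digitWeight p m r with hD
  have hw' := Finset.mem_Icc.1 hw
  have hy' := Finset.mem_Icc.1 hy
  have hprime : ∀ i, (p (i % m + 1)).Prime := fun i =>
    hp _ (Finset.mem_Icc.2 ⟨by omega, Nat.mod_lt i hm0⟩)
  have hsucc : ∀ i, D (i + 1) = D i * p (i % m + 1) := digitWeight_succ hm0 hr
  have hr0 : 0 < r := hr ▸ Finset.prod_pos fun i hi => (hp i hi).pos
  have hpos : ∀ i, 0 < D i := by
    intro i
    induction i with
    | zero => simp [hD, digitWeight, dwy, bigP]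
    | succ i ih => rw [hsucc]; exact Nat.mul_pos ih (hprime i).pos
  have h2 : ∀ i, 2 * D i ≤ D (i + 1) := fun i => by
    rw [hsucc, mul_comm]; exact Nat.mul_le_mul_left _ (hprime i).two_le
  have hdvd' : ∀ i, D i ∣ D (i + 1) := fun i => ⟨_, hsucc i⟩
  have hperiod : ∀ i, D (i + m) = r * D i := digitWeight_add_period p r hm0
  set A := w * m + (y - 1) with hA
  obtain ⟨c, hc⟩ : ∃ c, n' * m = A + m + m + c := by
    apply Nat.exists_eq_add_of_le
    have := Nat.mul_le_mul_right m (show w + 3 ≤ n' by omega)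
    rw [Nat.add_mul] at this
    omega
  have hlD : l = D (n' * m) := by
    have := digitWeight_mul_add p r n' hm0
    rw [Nat.add_zero] at this
    rw [hl, hD, this, dwy, Nat.zero_add, bigP_one, mul_one]
  have hl0 : 0 < l := hlD ▸ hpos _
  obtain ⟨K', hK'⟩ : r * (r * D A) ∣ l := by
    rw [hlD, hc, ← hperiod, ← hperiod]; exact dvd_add_of_forall_dvd_succ hdvd' _ _
  obtain ⟨K, hK, hrK⟩ : ∃ K, l = r * D A * K ∧ r ≤ K := by
    refine ⟨r * K', by rw [hK']; ring, Nat.le_mul_of_pos_right r (Nat.pos_of_ne_zero ?_)⟩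
    rintro rfl
    omega
  have hset : ∀ E, {x : F | ∃ t, (t < l ∧ ∀ k < m, digit p m r t (w * m + y + k) = 0) ∧
      ∃ s < r, x = ζ ^ (u * (t + s * E))} ⊆ downloadSet ζ u r (D A) K E := by
    rintro E x ⟨t, ⟨ht, hdig⟩, s, hs, rfl⟩
    have hmod : t % D (A + m) = t % D A := by
      refine mod_weight_eq_of_digits_eq_zero hsucc m fun k hk => ?_
      have := hdig k hk
      rwa [digit, show w * m + y + k - 1 = A + k by omega] at this
    refine ⟨t % D A, Nat.mod_lt _ (hpos A), t / (r * D A),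
      Nat.div_lt_of_lt_mul (hK ▸ ht), s, hs, ?_⟩
    rw [← hmod, hperiod, Nat.mod_add_div]
  have hbound : ∑ wz ∈ (Finset.range n' ×ˢ Finset.Icc 1 m).erase (w, y),
      Module.finrank B ↥(Submodule.span B
        {x : F | ∃ t, (t < l ∧ ∀ k < m, digit p m r t (w * m + y + k) = 0) ∧
          ∃ s < r, x = ζ ^ (u * (t + s * dwy p r wz.1 wz.2))}) ≤
      (n' * m - 1 + 3 * r) * (D A * K) := by
    refine (Finset.sum_le_sum fun wz _ =>
      Submodule.finrank_mono (Submodule.span_mono (hset _))).trans ?_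
    rw [sum_rack_erase_eq_sum_position_erase p hy fun E =>
      Module.finrank B (Submodule.span B (downloadSet ζ u r (D A) K E)), hc, add_assoc (A + m)]
    refine sum_finrank_span_downloadSet_le ζ u r m A (m + c) K hm0 hpos h2 hdvd' (hperiod A)
      ?_ hrK
    rw [← add_assoc, ← hc, ← hlD, hK]
  have hlt : (n' * m - 1 + 3 * r) * (D A * K) < (n' * m + 3 * r + 3 * m) * (D A * K) :=
    Nat.mul_lt_mul_of_pos_right (by omega) (Nat.mul_pos (hpos A) (by omega))
  have hrhs : (((n' * m : ℕ) : ℝ) - 1 + 3 * r + 3 * m + 1) * l / r =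
      (((n' * m + 3 * r + 3 * m) * (D A * K) : ℕ) : ℝ) := by
    have hr' : (r : ℝ) ≠ 0 := by exact_mod_cast hr0.ne'
    rw [div_eq_iff hr', hK]
    push_cast
    ring
  rw [hrhs]
  exact_mod_cast hbound.trans_lt hlt
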